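/- Let σ > 0, let A ∈ ℝ^{m×n} be a matrix, and let v ∈ ℝ^m be a vector lying in the range of A, i.e., there exists w₀ ∈ ℝ^n with A·w₀ = v. Let γ^σ be the isotropic Gaussian measure on ℝ^n, let P be its pushforward under the map z ↦ v + A·z, and let Q be its pushforward under z ↦ A·z. Set Δ := inf{‖w‖₂ : w ∈ ℝ^n, A·w = v} (which equals ‖A⁺v‖₂ for the Moore–Penrose pseudoinverse A⁺ of A). Then for every α ≥ 0 and every δ ≥ 0, (P, Q) is (α, δ)-close if and only if (gaussianReal Δ σ², gaussianReal 0 σ²) is (α, δ)-close; in other words, the hockey-stick divergence of order α between P and Q equals that between the one-dimensional Gaussians N(Δ, σ²) and N(0, σ²). -/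

import Mathlib

open MeasureTheory ProbabilityTheory Matrix

/-- `(P, Q)` is `(α, δ)`-close: `P(O) ≤ α·Q(O) + δ` for every measurable set `O`. -/
def Close {X : Type*} [MeasurableSpace X] (α δ : ℝ) (P Q : Measure X) : Prop :=
  ∀ O : Set X, MeasurableSet O → P O ≤ ENNReal.ofReal α * Q O + ENNReal.ofReal δ

/-!
For a unit vector `e`, an isotropic Gaussian `z` splits into the independent parts `⟪e, z⟫` and
`z - ⟪e, z⟫ • e`, and shifting `z` along `e` changes only the first one. Hence the shifted and the
unshifted laws arise from two one-dimensional Gaussians by the same randomized map, which preserves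
closeness; conversely `⟪e, ·⟫` maps them back to these two Gaussians.

The solution `x` of `A w = v` of least norm is the one in the row space of `A`. Replacing the shift
`v` by `A x` puts us in the above situation with `e` along `x`, and since `x` is a combination of
rows, `⟪x, z⟫` is a function of `A z`, so nothing is lost when only `A z` is observed.
-/

open scoped NNReal InnerProductSpace

section Close

variable {X Y : Type*} [MeasurableSpace X] [MeasurableSpace Y] {α δ : ℝ} {P Q : Measure X}

lemma Close.map (h : Close α δ P Q) {f : X → Y} (hf : Measurable f) :
    Close α δ (P.map f) (Q.map f) := by
  intro O hO
  rw [Measure.map_apply hf hO, Measure.map_apply hf hO]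
  exact h _ (hf hO)

lemma Close.prod_right [SFinite P] [SFinite Q] (h : Close α δ P Q)
    (ν : Measure Y) [IsProbabilityMeasure ν] :
    Close α δ (P.prod ν) (Q.prod ν) := by
  intro O hO
  rw [Measure.prod_apply_symm hO, Measure.prod_apply_symm hO]
  calc ∫⁻ y, P ((fun x => (x, y)) ⁻¹' O) ∂ν
      ≤ ∫⁻ y, (ENNReal.ofReal α * Q ((fun x => (x, y)) ⁻¹' O) + ENNReal.ofReal δ) ∂ν :=
        lintegral_mono fun y => h _ (measurable_prodMk_right hO)
    _ = ENNReal.ofReal α * ∫⁻ y, Q ((fun x => (x, y)) ⁻¹' O) ∂ν + ENNReal.ofReal δ := by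
        rw [lintegral_add_right _ measurable_const,
          lintegral_const_mul _ (measurable_measure_prodMk_right hO), lintegral_const,
          measure_univ, mul_one]

lemma close_self_iff [IsProbabilityMeasure P] :
    Close α δ P P ↔ 1 ≤ ENNReal.ofReal α + ENNReal.ofReal δ := by
  refine ⟨fun h => by simpa using h Set.univ MeasurableSet.univ, fun h O _ => ?_⟩
  calc P O = 1 * P O := (one_mul _).symm
    _ ≤ (ENNReal.ofReal α + ENNReal.ofReal δ) * P O := by gcongr
    _ = ENNReal.ofReal α * P O + ENNReal.ofReal δ * P O := add_mul _ _ _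
    _ ≤ ENNReal.ofReal α * P O + ENNReal.ofReal δ := by
        gcongr
        exact mul_le_of_le_one_right' prob_le_one

end Close

section IsotropicGaussian

lemma inner_smul_add_of_norm_eq_one {E : Type*} [NormedAddCommGroup E] [InnerProductSpace ℝ E]
    {e : E} (he : ‖e‖ = 1) (r : ℝ) (z : E) : ⟪e, r • e + z⟫_ℝ = r + ⟪e, z⟫_ℝ := by
  rw [inner_add_right, real_inner_smul_right, real_inner_self_eq_norm_sq, he, one_pow, mul_one]

variable {E : Type*} [NormedAddCommGroup E] [InnerProductSpace ℝ E] [FiniteDimensional ℝ E]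
  [MeasurableSpace E] [BorelSpace E] {s : ℝ≥0}

variable (E s) in
/-- The centered Gaussian measure on `E` whose covariance is `s` times the identity. -/
noncomputable def isotropicGaussian : Measure E := (stdGaussian E).map (√(s : ℝ) • ·)

instance : IsGaussian (isotropicGaussian E s) :=
  isGaussian_map (√(s : ℝ) • ContinuousLinearMap.id ℝ E)

lemma charFun_isotropicGaussian (t : E) :
    charFun (isotropicGaussian E s) t = Complex.exp (-(s * ‖t‖ ^ 2 / 2)) := by
  have h : ‖√(s : ℝ) • t‖ ^ 2 = s * ‖t‖ ^ 2 := by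
    rw [norm_smul, mul_pow, Real.norm_of_nonneg (Real.sqrt_nonneg _), Real.sq_sqrt s.coe_nonneg]
  rw [isotropicGaussian, charFun_map_smul, charFun_stdGaussian, ← Complex.ofReal_pow, h]
  push_cast
  ring_nf

lemma map_toLp_pi_gaussianReal {ι : Type*} [Fintype ι] :
    (Measure.pi fun _ : ι => gaussianReal 0 s).map (WithLp.toLp 2)
      = isotropicGaussian (EuclideanSpace ℝ ι) s := by
  refine Measure.ext_of_charFun (funext fun t => ?_)
  simp_rw [charFun_isotropicGaussian, charFun_pi, charFun_gaussianReal, ← Complex.exp_sum,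
    ← Complex.ofReal_pow, EuclideanSpace.real_norm_sq_eq]
  simp [Finset.mul_sum, Finset.sum_div]

lemma map_inner_isotropicGaussian (x : E) :
    (isotropicGaussian E s).map (fun z => ⟪x, z⟫_ℝ) = gaussianReal 0 (s * ‖x‖₊ ^ 2) := by
  refine Measure.ext_of_charFun (funext fun t => ?_)
  calc charFun ((isotropicGaussian E s).map fun z => ⟪x, z⟫_ℝ) t
      = charFun (isotropicGaussian E s) (t • x) := by
        rw [charFun_apply, charFun_apply, integral_map (by fun_prop) (by fun_prop)]
        simp [real_inner_smul_right, real_inner_comm, mul_comm]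
    _ = Complex.exp (-(s * ((|t| * ‖x‖) ^ 2 : ℝ) / 2)) := by
        rw [charFun_isotropicGaussian, norm_smul, Real.norm_eq_abs, Complex.ofReal_pow]
    _ = charFun (gaussianReal 0 (s * ‖x‖₊ ^ 2)) t := by
        rw [charFun_gaussianReal, mul_pow, sq_abs]
        push_cast
        ring_nf

lemma covariance_inner_isotropicGaussian (x y : E) :
    cov[fun z => ⟪x, z⟫_ℝ, fun z => ⟪y, z⟫_ℝ; isotropicGaussian E s] = s * ⟪x, y⟫_ℝ := by
  rw [isotropicGaussian, covariance_map (by fun_prop) (by fun_prop) (by fun_prop)]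
  simp only [Function.comp_def, real_inner_smul_right]
  rw [covariance_const_mul_left, covariance_const_mul_right,
    ← covarianceBilin_apply_eq_cov IsGaussian.memLp_two_id, covarianceBilin_stdGaussian,
    innerSL_apply_apply, ← mul_assoc, Real.mul_self_sqrt s.coe_nonneg]

lemma indepFun_inner_sub_isotropicGaussian {e : E} (he : ‖e‖ = 1) :
    IndepFun (fun z => ⟪e, z⟫_ℝ) (fun z => z - ⟪e, z⟫_ℝ • e) (isotropicGaussian E s) := by
  let L : E →L[ℝ] ℝ × E :=
    (innerSL ℝ e).prod (.id ℝ E - (innerSL ℝ e).smulRight e)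
  have hL : HasGaussianLaw (fun z => (⟪e, z⟫_ℝ, z - ⟪e, z⟫_ℝ • e)) (isotropicGaussian E s) :=
    IsGaussian.hasGaussianLaw_id.map L
  refine hL.indepFun_of_covariance_inner fun t y => ?_
  have ht : (fun z => ⟪t, ⟪e, z⟫_ℝ⟫_ℝ) = fun z => ⟪t • e, z⟫_ℝ := by
    ext z
    simp [real_inner_smul_left, mul_comm]
  have hy : (fun z => ⟪y, z - ⟪e, z⟫_ℝ • e⟫_ℝ) = fun z => ⟪y - ⟪e, y⟫_ℝ • e, z⟫_ℝ := by
    ext z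
    simp only [inner_sub_left, inner_sub_right, real_inner_smul_left, real_inner_smul_right,
      real_inner_comm y e]
    ring
  have horth : ⟪t • e, y - ⟪e, y⟫_ℝ • e⟫_ℝ = 0 := by
    simp [inner_sub_right, real_inner_smul_left, real_inner_smul_right, he, mul_comm]
  rw [ht, hy, covariance_inner_isotropicGaussian, horth, mul_zero]

lemma map_inner_smul_add_isotropicGaussian {e : E} (he : ‖e‖ = 1) (r : ℝ) :
    (isotropicGaussian E s).map (fun z => ⟪e, r • e + z⟫_ℝ) = gaussianReal r s := by
  have hinner : (fun z => ⟪e, r • e + z⟫_ℝ) = (r + ·) ∘ fun z => ⟪e, z⟫_ℝ :=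
    funext (inner_smul_add_of_norm_eq_one he r)
  have hnorm : ‖e‖₊ = 1 := NNReal.eq he
  rw [hinner, ← Measure.map_map (by fun_prop) (by fun_prop), map_inner_isotropicGaussian,
    gaussianReal_map_const_add, zero_add, hnorm, one_pow, mul_one]

lemma exists_map_prod_eq_map_smul_add_isotropicGaussian {e : E} (he : ‖e‖ = 1) :
    ∃ ν : Measure E, IsProbabilityMeasure ν ∧ ∀ r : ℝ,
      ((gaussianReal r s).prod ν).map (fun p => p.1 • e + p.2)
        = (isotropicGaussian E s).map (r • e + ·) := by
  have hY : Measurable fun z : E => z - ⟪e, z⟫_ℝ • e := by fun_prop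
  refine ⟨(isotropicGaussian E s).map fun z => z - ⟪e, z⟫_ℝ • e,
    Measure.isProbabilityMeasure_map hY.aemeasurable, fun r => ?_⟩
  have hindep : IndepFun (fun z => ⟪e, r • e + z⟫_ℝ) (fun z => z - ⟪e, z⟫_ℝ • e)
      (isotropicGaussian E s) := by
    simpa only [inner_smul_add_of_norm_eq_one he, Function.comp_def, id_eq] using
      (indepFun_inner_sub_isotropicGaussian he).comp (measurable_const_add r) measurable_id
  rw [← map_inner_smul_add_isotropicGaussian he r,
    ← (indepFun_iff_map_prod_eq_prod_map_map (by fun_prop) (by fun_prop)).1 hindep,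
    Measure.map_map (by fun_prop) (by fun_prop)]
  congr 1 with z
  simp only [Function.comp_apply, inner_smul_add_of_norm_eq_one he]
  module

variable {X : Type*} [MeasurableSpace X] {T : E → X} {ℓ : X → ℝ} {α δ : ℝ}

lemma close_map_smul_add_isotropicGaussian_iff (hT : Measurable T) (hℓ : Measurable ℓ) {e : E}
    (he : ‖e‖ = 1) (hℓT : ∀ z, ℓ (T z) = ⟪e, z⟫_ℝ) (r : ℝ) :
    Close α δ ((isotropicGaussian E s).map fun z => T (r • e + z)) ((isotropicGaussian E s).map T)
      ↔ Close α δ (gaussianReal r s) (gaussianReal 0 s) := by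
  have hT₀ : T = fun z => T ((0 : ℝ) • e + z) := by simp only [zero_smul, zero_add]
  nth_rw 2 [hT₀]
  constructor <;> intro h
  · have hlaw (t : ℝ) :
        ((isotropicGaussian E s).map fun z => T (t • e + z)).map ℓ = gaussianReal t s := by
      rw [Measure.map_map hℓ (by fun_prop), ← map_inner_smul_add_isotropicGaussian he t]
      simp only [Function.comp_def, hℓT]
    simpa only [hlaw] using h.map hℓ
  · obtain ⟨ν, _, hν⟩ := exists_map_prod_eq_map_smul_add_isotropicGaussian (s := s) he
    have hlaw (t : ℝ) : (((gaussianReal t s).prod ν).map fun p => p.1 • e + p.2).map T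
        = (isotropicGaussian E s).map fun z => T (t • e + z) := by
      rw [hν, Measure.map_map hT (by fun_prop), Function.comp_def]
    have hadd : Measurable fun p : ℝ × E => p.1 • e + p.2 := by fun_prop
    simpa only [hlaw] using ((h.prod_right ν).map hadd).map hT

theorem close_map_add_isotropicGaussian_iff (hT : Measurable T) (hℓ : Measurable ℓ) {x : E}
    (hℓT : ∀ z, ℓ (T z) = ⟪x, z⟫_ℝ) :
    Close α δ ((isotropicGaussian E s).map fun z => T (x + z)) ((isotropicGaussian E s).map T)
      ↔ Close α δ (gaussianReal ‖x‖ s) (gaussianReal 0 s) := by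
  rcases eq_or_ne x 0 with rfl | hx
  · have := Measure.isProbabilityMeasure_map (μ := isotropicGaussian E s) hT.aemeasurable
    simp only [zero_add, norm_zero, close_self_iff]
  · have hunit : ‖‖x‖⁻¹ • x‖ = 1 := norm_smul_inv_norm hx
    have hx' : ‖x‖ • ‖x‖⁻¹ • x = x := smul_inv_smul₀ (norm_ne_zero_iff.2 hx) x
    have h := close_map_smul_add_isotropicGaussian_iff (s := s) (α := α) (δ := δ) hT
      (hℓ.const_mul ‖x‖⁻¹) hunit (fun z => by rw [hℓT, real_inner_smul_left]) ‖x‖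
    rwa [hx'] at h

end IsotropicGaussian

lemma measurable_mulVec {ι κ : Type*} [Fintype ι] (A : Matrix κ ι ℝ) : Measurable A.mulVec :=
  measurable_pi_lambda _ fun _ => by
    simp only [mulVec, dotProduct]
    fun_prop

section RowSpace

variable {ι κ : Type*} [Fintype ι]

/-- The span of the rows of `A` inside Euclidean space; it is the orthogonal complement of the
kernel of `A`. -/
def rowSpace (A : Matrix κ ι ℝ) : Submodule ℝ (EuclideanSpace ℝ ι) :=
  Submodule.span ℝ (Set.range fun k => WithLp.toLp 2 (A k))

lemma inner_toLp_row (A : Matrix κ ι ℝ) (k : κ) (x : EuclideanSpace ℝ ι) :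
    ⟪WithLp.toLp 2 (A k), x⟫_ℝ = (A *ᵥ x) k := by
  simp [mulVec, EuclideanSpace.inner_eq_star_dotProduct, dotProduct_comm]

lemma mem_rowSpace_orthogonal_iff {A : Matrix κ ι ℝ} {x : EuclideanSpace ℝ ι} :
    x ∈ (rowSpace A)ᗮ ↔ A *ᵥ x = 0 := by
  rw [← Submodule.span_singleton_le_iff_mem, Submodule.le_orthogonal_iff_le_orthogonal, rowSpace,
    Submodule.span_le, Set.range_subset_iff, funext_iff]
  refine forall_congr' fun k => ?_
  rw [SetLike.mem_coe, Submodule.mem_orthogonal_singleton_iff_inner_left, inner_toLp_row,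
    Pi.zero_apply]

lemma starProjection_rowSpace_eq_iff {A : Matrix κ ι ℝ} {x y : EuclideanSpace ℝ ι} :
    (rowSpace A).starProjection x = (rowSpace A).starProjection y ↔ A *ᵥ x = A *ᵥ y := by
  rw [← sub_eq_zero, ← map_sub, Submodule.starProjection_apply_eq_zero_iff,
    mem_rowSpace_orthogonal_iff, WithLp.ofLp_sub, mulVec_sub, sub_eq_zero]

lemma mulVec_starProjection_rowSpace (A : Matrix κ ι ℝ) (x : EuclideanSpace ℝ ι) :
    A *ᵥ (rowSpace A).starProjection x = A *ᵥ x :=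
  starProjection_rowSpace_eq_iff.1 <|
    Submodule.starProjection_eq_self_iff.2 (Submodule.starProjection_apply_mem _ x)

lemma isLeast_norm_starProjection_rowSpace (A : Matrix κ ι ℝ) (x : EuclideanSpace ℝ ι) :
    IsLeast {c : ℝ | ∃ w : ι → ℝ, A *ᵥ w = A *ᵥ x ∧ c = √(∑ i, w i ^ 2)}
      ‖(rowSpace A).starProjection x‖ := by
  have hnorm (y : EuclideanSpace ℝ ι) : ‖y‖ = √(∑ i, y i ^ 2) := by
    rw [← EuclideanSpace.real_norm_sq_eq, Real.sqrt_sq (norm_nonneg y)]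
  refine ⟨⟨_, mulVec_starProjection_rowSpace A x, hnorm _⟩, ?_⟩
  rintro _ ⟨w, hw, rfl⟩
  calc ‖(rowSpace A).starProjection x‖
      = ‖(rowSpace A).starProjection (WithLp.toLp 2 w)‖ := by
        rw [starProjection_rowSpace_eq_iff.2 hw]
    _ ≤ ‖WithLp.toLp 2 w‖ := Submodule.norm_starProjection_apply_le _ _
    _ = √(∑ i, w i ^ 2) := hnorm _

lemma exists_measurable_mulVec_eq_inner {A : Matrix κ ι ℝ} {x : EuclideanSpace ℝ ι}
    (hx : x ∈ rowSpace A) :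
    ∃ ℓ : (κ → ℝ) → ℝ, Measurable ℓ ∧ ∀ z : EuclideanSpace ℝ ι, ℓ (A *ᵥ z) = ⟪x, z⟫_ℝ := by
  induction hx using Submodule.span_induction with
  | mem x hx =>
    obtain ⟨k, rfl⟩ := hx
    exact ⟨fun y => y k, measurable_pi_apply k, fun z => (inner_toLp_row A k z).symm⟩
  | zero => exact ⟨0, measurable_zero, fun z => by simp⟩
  | add x y _ _ ihx ihy =>
    obtain ⟨f, hf, hfx⟩ := ihx
    obtain ⟨g, hg, hgy⟩ := ihy
    exact ⟨f + g, hf.add hg, fun z => by simp [hfx, hgy, inner_add_left]⟩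
  | smul a x _ ih =>
    obtain ⟨f, hf, hfx⟩ := ih
    exact ⟨a • f, hf.const_smul a, fun z => by simp [hfx, real_inner_smul_left]⟩

end RowSpace

theorem projected_gaussian_close_iff_general {ι κ : Type*} [Fintype ι] (s : ℝ≥0)
    (A : Matrix κ ι ℝ) (v : κ → ℝ) (hv : ∃ w₀ : ι → ℝ, A *ᵥ w₀ = v) (α δ : ℝ≥0) :
    Close α δ
        ((Measure.pi fun _ : ι => gaussianReal 0 s).map fun z => v + A *ᵥ z)
        ((Measure.pi fun _ : ι => gaussianReal 0 s).map A.mulVec)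
      ↔ Close α δ
          (gaussianReal (sInf {c : ℝ | ∃ w : ι → ℝ, A *ᵥ w = v ∧ c = √(∑ i, w i ^ 2)}) s)
          (gaussianReal 0 s) := by
  obtain ⟨w₀, rfl⟩ := hv
  let T : EuclideanSpace ℝ ι → κ → ℝ := fun z => A *ᵥ z
  have hT : Measurable T := (measurable_mulVec A).comp (by fun_prop)
  let x := (rowSpace A).starProjection (WithLp.toLp 2 w₀)
  have hx : A *ᵥ x = A *ᵥ w₀ := mulVec_starProjection_rowSpace A (WithLp.toLp 2 w₀)
  obtain ⟨ℓ, hℓ, hℓT⟩ :=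
    exists_measurable_mulVec_eq_inner ((rowSpace A).starProjection_apply_mem (WithLp.toLp 2 w₀))
  have hP : ((Measure.pi fun _ : ι => gaussianReal 0 s).map fun z => A *ᵥ w₀ + A *ᵥ z)
      = (isotropicGaussian (EuclideanSpace ℝ ι) s).map fun z => T (x + z) := by
    rw [← map_toLp_pi_gaussianReal, Measure.map_map (by fun_prop) (by fun_prop), ← hx]
    simp only [Function.comp_def, T, WithLp.ofLp_add, mulVec_add]
  have hQ : (Measure.pi fun _ : ι => gaussianReal 0 s).map A.mulVec
      = (isotropicGaussian (EuclideanSpace ℝ ι) s).map T := by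
    rw [← map_toLp_pi_gaussianReal, Measure.map_map hT (by fun_prop), Function.comp_def]
  rw [(isLeast_norm_starProjection_rowSpace A (WithLp.toLp 2 w₀)).csInf_eq, hP, hQ]
  exact close_map_add_isotropicGaussian_iff hT hℓ hℓT

/-- DP analysis of the projected Gaussian mechanism: if `v ∈ Range(A)`, then with
`P = (z ↦ v + A z)_* N(0, σ² I_n)`, `Q = (z ↦ A z)_* N(0, σ² I_n)` and
`Δ = inf{‖w‖₂ : A w = v} (= ‖A⁺ v‖₂)`, the pair `(P, Q)` is `(α, δ)`-close if and only if
`(N(Δ, σ²), N(0, σ²))` is `(α, δ)`-close. -/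
theorem projected_gaussian_close_iff (m n : ℕ) (σ : ℝ) (hσ : 0 < σ)
    (A : Matrix (Fin m) (Fin n) ℝ) (v : Fin m → ℝ)
    (hv : ∃ w₀ : Fin n → ℝ, A.mulVec w₀ = v)
    (α δ : ℝ) (hα : 0 ≤ α) (hδ : 0 ≤ δ) :
    Close α δ
        (Measure.map (fun z => v + A.mulVec z)
          (Measure.pi fun _ : Fin n => gaussianReal 0 ⟨σ ^ 2, sq_nonneg σ⟩))
        (Measure.map A.mulVec
          (Measure.pi fun _ : Fin n => gaussianReal 0 ⟨σ ^ 2, sq_nonneg σ⟩))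
      ↔ Close α δ
          (gaussianReal
            (sInf {c : ℝ | ∃ w : Fin n → ℝ, A.mulVec w = v ∧ c = Real.sqrt (∑ i, w i ^ 2)})
            ⟨σ ^ 2, sq_nonneg σ⟩)
          (gaussianReal 0 ⟨σ ^ 2, sq_nonneg σ⟩) :=
  projected_gaussian_close_iff_general _ A v hv ⟨α, hα⟩ ⟨δ, hδ⟩
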